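/- arXiv:1410.3125 — 7 statements merged into one kernel-verified Lean document; each statement's English description precedes it below -/
import Mathlib

section
/- Let (A, b, c) be an LP in dual form with A an m×n real matrix, and let (X_P, X_Q) be a fractional automorphism of (A, b, c). If x ∈ ℝ^n is feasible, i.e. A·x ≤ b entrywise, then X_P·x is also feasible and ⟨c, X_P·x⟩ = ⟨c, x⟩. -/
open Matrix

/-- A square real matrix is doubly stochastic: nonnegative entries,
every row and every column sums to 1. -/
def IsDoublyStochastic {m : ℕ} (S : Matrix (Fin m) (Fin m) ℝ) : Prop :=
  (∀ i j, 0 ≤ S i j) ∧ (∀ i, ∑ j, S i j = 1) ∧ (∀ j, ∑ i, S i j = 1)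

/-- A fractional automorphism of the LP `(A, b, c)` in dual form:
a pair of doubly stochastic matrices with `A·X_P = X_Q·A`, `cᵀ·X_P = cᵀ`
and `X_Q·b = b`. -/
def IsFractionalAutomorphism {m n : ℕ} (A : Matrix (Fin m) (Fin n) ℝ)
    (b : Fin m → ℝ) (c : Fin n → ℝ)
    (XP : Matrix (Fin n) (Fin n) ℝ) (XQ : Matrix (Fin m) (Fin m) ℝ) : Prop :=
  IsDoublyStochastic XP ∧ IsDoublyStochastic XQ ∧
    A * XP = XQ * A ∧ XP.vecMul c = c ∧ XQ.mulVec b = b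

/-- If `x` is feasible for the LP `(A,b,c)` and `(X_P, X_Q)` is a
fractional automorphism, then `X_P·x` is feasible with the same objective value. -/
theorem fractionalAutomorphism_feasible {m n : ℕ}
    (A : Matrix (Fin m) (Fin n) ℝ) (b : Fin m → ℝ) (c : Fin n → ℝ)
    (XP : Matrix (Fin n) (Fin n) ℝ) (XQ : Matrix (Fin m) (Fin m) ℝ)
    (hFA : IsFractionalAutomorphism A b c XP XQ)
    (x : Fin n → ℝ) (hx : A.mulVec x ≤ b) :
    A.mulVec (XP.mulVec x) ≤ b ∧ c ⬝ᵥ XP.mulVec x = c ⬝ᵥ x := by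
  obtain ⟨_, hQ, hA, hc, hb⟩ := hFA
  constructor
  · rw [Matrix.mulVec_mulVec, hA, ← Matrix.mulVec_mulVec]
    intro i
    calc (XQ.mulVec (A.mulVec x)) i ≤ (XQ.mulVec b) i := by
          change ∑ j, XQ i j * (A.mulVec x) j ≤ ∑ j, XQ i j * b j
          exact Finset.sum_le_sum fun j _ => mul_le_mul_of_nonneg_left (hx j) (hQ.1 i j)
      _ = b i := by rw [hb]
  · rw [Matrix.dotProduct_mulVec, hc]
end

section
/- Let (A, b, c) be an LP in dual form with A an m×n real matrix, and let (X_P, X_Q) be a fractional automorphism of (A, b, c). If x* ∈ ℝ^n is an optimal solution, i.e. x* is feasible and ⟨c, x*⟩ ≤ ⟨c, x⟩ for every feasible x, then X_P·x* is also an optimal solution. -/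
open Matrix

/-- If `x*` is an optimal solution of the LP `(A,b,c)` and
`(X_P, X_Q)` is a fractional automorphism, then `X_P·x*` is optimal as well. -/
theorem fractionalAutomorphism_optimal {m n : ℕ}
    (A : Matrix (Fin m) (Fin n) ℝ) (b : Fin m → ℝ) (c : Fin n → ℝ)
    (XP : Matrix (Fin n) (Fin n) ℝ) (XQ : Matrix (Fin m) (Fin m) ℝ)
    (hFA : IsFractionalAutomorphism A b c XP XQ)
    (xs : Fin n → ℝ) (hfeas : A.mulVec xs ≤ b)
    (hopt : ∀ x : Fin n → ℝ, A.mulVec x ≤ b → c ⬝ᵥ xs ≤ c ⬝ᵥ x) :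
    A.mulVec (XP.mulVec xs) ≤ b ∧
      ∀ x : Fin n → ℝ, A.mulVec x ≤ b → c ⬝ᵥ XP.mulVec xs ≤ c ⬝ᵥ x := by
  obtain ⟨-, ⟨hQ, -, -⟩, hA, hc, hb⟩ := hFA
  refine ⟨?_, fun x hx => ?_⟩
  · rw [Matrix.mulVec_mulVec, hA, ← Matrix.mulVec_mulVec]
    intro i
    calc (XQ.mulVec (A.mulVec xs)) i ≤ (XQ.mulVec b) i :=
          by rw [Matrix.mulVec, Matrix.mulVec, dotProduct, dotProduct]; exact Finset.sum_le_sum fun j _ => mul_le_mul_of_nonneg_left (hfeas j) (hQ i j)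
      _ = b i := by rw [hb]
  · rw [Matrix.dotProduct_mulVec, hc]
    exact hopt x hx
end

section
/- Let A be an m×n real matrix, and let (Q, P) be an equitable pair of partitions for A, where Q partitions the row indices and P partitions the column indices. Let X_P be the partition matrix of P and X_Q the partition matrix of Q. Then A·X_P = X_Q·A. -/
open Matrix

open scoped Classical

/-- The partition matrix of a partition (given by the class map `f`). -/
noncomputable def partitionMatrix {n k : ℕ} (f : Fin n → Fin k) :
    Matrix (Fin n) (Fin n) ℝ :=
  fun i j =>
    if f i = f j then (1 : ℝ) / ((Finset.univ.filter fun l => f l = f i).card : ℝ)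
    else 0

theorem sum_eq_of_counts {a b : ℕ} (f : Fin a → Fin b) (C : Fin b)
    (g g' : Fin a → ℝ)
    (h : ∀ v : ℝ, (Finset.univ.filter fun j => f j = C ∧ g j = v).card =
      (Finset.univ.filter fun j => f j = C ∧ g' j = v).card) :
    ∑ j ∈ Finset.univ.filter (fun j => f j = C), g j =
      ∑ j ∈ Finset.univ.filter (fun j => f j = C), g' j := by
  have key : (Finset.univ.filter (fun j => f j = C)).val.map g =
      (Finset.univ.filter (fun j => f j = C)).val.map g' := by
    ext v
    rw [Multiset.count_map, Multiset.count_map]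
    have e := h v
    rw [← Finset.filter_filter, ← Finset.filter_filter] at e
    simp only [eq_comm (a := v)]
    exact e
  exact congrArg Multiset.sum key

/-- If `(Q, P)` is an equitable pair of partitions for `A`
(rows partitioned by `fR`, columns by `fC`, with matching value counts in
both directions), then `A·X_P = X_Q·A` for the corresponding partition
matrices. -/
theorem equitable_partition_fractionalAutomorphism {m n p q : ℕ}
    (A : Matrix (Fin m) (Fin n) ℝ) (fR : Fin m → Fin q) (fC : Fin n → Fin p)
    (hrow : ∀ i i' : Fin m, fR i = fR i' → ∀ (C : Fin p) (v : ℝ),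
      (Finset.univ.filter fun j => fC j = C ∧ A i j = v).card =
        (Finset.univ.filter fun j => fC j = C ∧ A i' j = v).card)
    (hcol : ∀ j j' : Fin n, fC j = fC j' → ∀ (R : Fin q) (v : ℝ),
      (Finset.univ.filter fun i => fR i = R ∧ A i j = v).card =
        (Finset.univ.filter fun i => fR i = R ∧ A i j' = v).card) :
    A * partitionMatrix fC = partitionMatrix fR * A := by
  ext i j
  have hL : (A * partitionMatrix fC) i j =
      (∑ l ∈ Finset.univ.filter (fun l => fC l = fC j), A i l) /
        ((Finset.univ.filter fun l => fC l = fC j).card : ℝ) := by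
    rw [Matrix.mul_apply, Finset.sum_div, Finset.sum_filter]
    refine Finset.sum_congr rfl fun l _ => ?_
    unfold partitionMatrix
    by_cases h : fC l = fC j
    · simp [h, div_eq_mul_inv]
    · simp [h]
  have hR : (partitionMatrix fR * A) i j =
      (∑ l ∈ Finset.univ.filter (fun l => fR l = fR i), A l j) /
        ((Finset.univ.filter fun l => fR l = fR i).card : ℝ) := by
    rw [Matrix.mul_apply, Finset.sum_div, Finset.sum_filter]
    refine Finset.sum_congr rfl fun l _ => ?_
    unfold partitionMatrix
    by_cases h : fR l = fR i
    · simp [h, div_eq_mul_inv, mul_comm]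
    · simp [h, Ne.symm h]
  rw [hL, hR]
  have cC : ((Finset.univ.filter fun l => fC l = fC j).card : ℝ) ≠ 0 := by
    exact_mod_cast (Finset.card_pos.mpr ⟨j, by simp⟩).ne'
  have cR : ((Finset.univ.filter fun l => fR l = fR i).card : ℝ) ≠ 0 := by
    exact_mod_cast (Finset.card_pos.mpr ⟨i, by simp⟩).ne'
  rw [div_eq_div_iff cC cR]
  have h1 : ∑ k ∈ Finset.univ.filter (fun k => fR k = fR i),
      ∑ l ∈ Finset.univ.filter (fun l => fC l = fC j), A k l =
      (∑ l ∈ Finset.univ.filter (fun l => fC l = fC j), A i l) *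
        ((Finset.univ.filter fun l => fR l = fR i).card : ℝ) := by
    rw [mul_comm, ← nsmul_eq_mul]
    refine Finset.sum_eq_card_nsmul fun k hk => ?_
    exact sum_eq_of_counts fC (fC j) (fun l => A k l) (fun l => A i l)
      (hrow k i (Finset.mem_filter.mp hk).2 (fC j))
  have h2 : ∑ l ∈ Finset.univ.filter (fun l => fC l = fC j),
      ∑ k ∈ Finset.univ.filter (fun k => fR k = fR i), A k l =
      (∑ k ∈ Finset.univ.filter (fun k => fR k = fR i), A k j) *
        ((Finset.univ.filter fun l => fC l = fC j).card : ℝ) := by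
    rw [mul_comm, ← nsmul_eq_mul]
    refine Finset.sum_eq_card_nsmul fun l hl => ?_
    exact sum_eq_of_counts fR (fR i) (fun k => A k l) (fun k => A k j)
      (hcol l j (Finset.mem_filter.mp hl).2 (fR i))
  rw [← h1, ← h2, Finset.sum_comm]
end

section
/- Let A be an m×n real matrix and let (X_P, X_Q) be a pair of doubly stochastic matrices (X_P of size n×n, X_Q of size m×m) with A·X_P = X_Q·A. Let P be the partition of the column indices into the classes of the equivalence relation generated by the relation {(j, j') : (X_P)_{jj'} > 0}, and let Q be the analogous partition of the row indices obtained from X_Q. Then (Q, P) is sum-equitable for A: for every row class R ∈ Q, every pair of rows i, i' ∈ R, and every column class C ∈ P, one has Σ_{j∈C} A_{ij} = Σ_{j∈C} A_{i'j}; and for every column class C ∈ P, every pair of columns j, j' ∈ C, and every row class R ∈ Q, one has Σ_{i∈R} A_{ij} = Σ_{i∈R} A_{ij'}. -/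
open Matrix

open scoped Classical

/-- A vector fixed by a doubly stochastic matrix is constant along positive entries. -/
lemma fixed_const {m : ℕ} (T : Matrix (Fin m) (Fin m) ℝ) (hT : IsDoublyStochastic T)
    (x : Fin m → ℝ) (hx : ∀ i, ∑ k, T i k * x k = x i) (i i' : Fin m) (h : 0 < T i i') :
    x i = x i' := by
  obtain ⟨h0, hr, hc⟩ := hT
  have e1 : ∑ a, ∑ b, T a b * x a ^ 2 = ∑ a, x a ^ 2 := by
    refine Finset.sum_congr rfl fun a _ => ?_
    rw [← Finset.sum_mul, hr, one_mul]
  have e2 : ∑ a, ∑ b, T a b * x b ^ 2 = ∑ a, x a ^ 2 := by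
    rw [Finset.sum_comm]
    refine Finset.sum_congr rfl fun a _ => ?_
    rw [← Finset.sum_mul, hc, one_mul]
  have e3 : ∑ a, ∑ b, x a * (T a b * x b) = ∑ a, x a ^ 2 := by
    refine Finset.sum_congr rfl fun a _ => ?_
    rw [← Finset.mul_sum, hx, sq]
  have key : ∑ a, ∑ b, T a b * (x a - x b) ^ 2 = 0 := by
    have : ∑ a, ∑ b, T a b * (x a - x b) ^ 2 = ∑ a, ∑ b, T a b * x a ^ 2
        + ∑ a, ∑ b, T a b * x b ^ 2 - 2 * ∑ a, ∑ b, x a * (T a b * x b) := by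
      simp only [Finset.mul_sum, ← Finset.sum_add_distrib, ← Finset.sum_sub_distrib]
      refine Finset.sum_congr rfl fun a _ => Finset.sum_congr rfl fun b _ => ?_
      ring
    rw [this, e1, e2, e3]; ring
  have hn : ∀ a b, 0 ≤ T a b * (x a - x b) ^ 2 := fun a b => mul_nonneg (h0 a b) (sq_nonneg _)
  rw [Finset.sum_eq_zero_iff_of_nonneg
    (fun a _ => Finset.sum_nonneg fun b _ => hn a b)] at key
  have k1 := key i (Finset.mem_univ _)
  rw [Finset.sum_eq_zero_iff_of_nonneg (fun b _ => hn i b)] at k1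
  have k2 := k1 i' (Finset.mem_univ _)
  rcases mul_eq_zero.1 k2 with h1 | h1
  · exact absurd h1 h.ne'
  · exact sub_eq_zero.1 (pow_eq_zero_iff (two_ne_zero) |>.1 h1)

lemma sums_eq {m n : ℕ} (A : Matrix (Fin m) (Fin n) ℝ)
    (S : Matrix (Fin n) (Fin n) ℝ) (T : Matrix (Fin m) (Fin m) ℝ)
    (hS : IsDoublyStochastic S) (hT : IsDoublyStochastic T)
    (hcomm : A * S = T * A) (s : Finset (Fin n))
    (hs : ∀ j k, 0 < S j k → (j ∈ s ↔ k ∈ s)) (i i' : Fin m) (h : 0 < T i i') :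
    ∑ j ∈ s, A i j = ∑ j ∈ s, A i' j := by
  refine fixed_const T hT (fun i => ∑ j ∈ s, A i j) (fun i => ?_) i i' h
  have hv : ∀ j, ∑ k ∈ s, S j k = if j ∈ s then 1 else 0 := by
    intro j
    have hz : ∀ k, ¬ (j ∈ s ↔ k ∈ s) → S j k = 0 := fun k hk =>
      le_antisymm (not_lt.1 fun hp => hk (hs j k hp)) (hS.1 j k)
    split_ifs with hj
    · rw [← hS.2.1 j]
      exact Finset.sum_subset (Finset.subset_univ _) fun k _ hk => hz k (by tauto)
    · exact Finset.sum_eq_zero fun k hk => hz k (by tauto)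
  calc ∑ k, T i k * ∑ j ∈ s, A k j = ∑ j ∈ s, (T * A) i j := by
        simp only [Finset.mul_sum, Matrix.mul_apply]
        exact Finset.sum_comm
    _ = ∑ j, A i j * ∑ k ∈ s, S j k := by
        rw [← hcomm]
        simp only [Finset.mul_sum, Matrix.mul_apply]
        exact Finset.sum_comm
    _ = ∑ j ∈ s, A i j := by simp [hv]

lemma transpose_ds {m : ℕ} {S : Matrix (Fin m) (Fin m) ℝ} (h : IsDoublyStochastic S) :
    IsDoublyStochastic Sᵀ := ⟨fun i j => h.1 j i, h.2.2, h.2.1⟩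

lemma eqvGen_const {α β : Type*} {r : α → α → Prop} (f : α → β)
    (hf : ∀ a b, r a b → f a = f b) {a b : α} (h : Relation.EqvGen r a b) : f a = f b := by
  induction h with
  | rel a b h => exact hf a b h
  | refl => rfl
  | symm _ _ _ ih => exact ih.symm
  | trans _ _ _ _ _ ih1 ih2 => exact ih1.trans ih2

lemma class_closed {n : ℕ} (r : Fin n → Fin n → Prop) (j₀ j k : Fin n) (h : r j k) :
    j ∈ Finset.univ.filter (fun j => Relation.EqvGen r j₀ j) ↔
    k ∈ Finset.univ.filter (fun j => Relation.EqvGen r j₀ j) := by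
  simp only [Finset.mem_filter, Finset.mem_univ, true_and]
  exact ⟨fun g => g.trans _ _ _ (.rel _ _ h), fun g => g.trans _ _ _ (.symm _ _ (.rel _ _ h))⟩

/-- Let `(X_P, X_Q)` be doubly stochastic with `A·X_P = X_Q·A`.
Let `P` (resp. `Q`) be the partition of the column (resp. row) indices into
classes of the equivalence relation generated by positivity of the entries of
`X_P` (resp. `X_Q`).  Then `(Q, P)` is sum-equitable for `A`: row sums over a
column class agree for rows in the same row class, and column sums over a row
class agree for columns in the same column class. -/
theorem fractionalAutomorphism_sum_equitable {m n : ℕ}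
    (A : Matrix (Fin m) (Fin n) ℝ)
    (XP : Matrix (Fin n) (Fin n) ℝ) (XQ : Matrix (Fin m) (Fin m) ℝ)
    (hP : IsDoublyStochastic XP) (hQ : IsDoublyStochastic XQ)
    (hcomm : A * XP = XQ * A) :
    (∀ i i' : Fin m, Relation.EqvGen (fun a b => 0 < XQ a b) i i' →
      ∀ j₀ : Fin n,
        ∑ j ∈ Finset.univ.filter
            (fun j => Relation.EqvGen (fun a b => 0 < XP a b) j₀ j), A i j =
        ∑ j ∈ Finset.univ.filter
            (fun j => Relation.EqvGen (fun a b => 0 < XP a b) j₀ j), A i' j) ∧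
    (∀ j j' : Fin n, Relation.EqvGen (fun a b => 0 < XP a b) j j' →
      ∀ i₀ : Fin m,
        ∑ i ∈ Finset.univ.filter
            (fun i => Relation.EqvGen (fun a b => 0 < XQ a b) i₀ i), A i j =
        ∑ i ∈ Finset.univ.filter
            (fun i => Relation.EqvGen (fun a b => 0 < XQ a b) i₀ i), A i j') := by
  constructor
  · intro i i' h j₀
    refine eqvGen_const (fun i => ∑ j ∈ Finset.univ.filter
      (fun j => Relation.EqvGen (fun a b => 0 < XP a b) j₀ j), A i j) (fun a b hab => ?_) h
    exact sums_eq A XP XQ hP hQ hcomm _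
      (fun j k hjk => class_closed (fun a b => 0 < XP a b) j₀ j k hjk) a b hab
  · intro j j' h i₀
    refine eqvGen_const (fun j => ∑ i ∈ Finset.univ.filter
      (fun i => Relation.EqvGen (fun a b => 0 < XQ a b) i₀ i), A i j) (fun a b hab => ?_) h
    have ht : Aᵀ * XQᵀ = XPᵀ * Aᵀ := by
      rw [← Matrix.transpose_mul, ← Matrix.transpose_mul, hcomm]
    exact (sums_eq Aᵀ XQᵀ XPᵀ (transpose_ds hQ) (transpose_ds hP) ht _
      (fun j k hjk => (class_closed (fun a b => 0 < XQ a b) i₀ k j hjk).symm) b a hab).symm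
end

section
/- Let (A, b, c) be an LP in dual form with A an m×n real matrix, and let (X_P, X_Q) be a fractional automorphism of (A, b, c) in which X_P is the partition matrix of a partition U of the column indices with normalized incidence matrix B (an n×k matrix). If y* ∈ ℝ^k is an optimal solution of the reduced LP (A·B, b, Bᵀ·c), i.e., A·B·y* ≤ b entrywise and ⟨Bᵀ·c, y*⟩ ≤ ⟨Bᵀ·c, y⟩ for every y ∈ ℝ^k with A·B·y ≤ b entrywise, then B·y* is an optimal solution of (A, b, c): A·(B·y*) ≤ b entrywise and ⟨c, B·y*⟩ ≤ ⟨c, x⟩ for every x ∈ ℝ^n with A·x ≤ b entrywise. -/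
open Matrix

/-- The normalized incidence matrix of a partition. -/
noncomputable def incidenceMatrix {n k : ℕ} (f : Fin n → Fin k) :
    Matrix (Fin n) (Fin k) ℝ :=
  fun i m =>
    if f i = m then (1 : ℝ) / Real.sqrt ((Finset.univ.filter fun l => f l = m).card : ℝ)
    else 0

theorem incidence_mul_transpose {n k : ℕ} (f : Fin n → Fin k) :
    incidenceMatrix f * (incidenceMatrix f)ᵀ = partitionMatrix f := by
  ext i j
  simp only [Matrix.mul_apply, Matrix.transpose_apply, incidenceMatrix, partitionMatrix]
  rw [Finset.sum_eq_single (f i)]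
  · by_cases h : f i = f j
    · rw [if_pos rfl, if_pos h.symm, if_pos h, div_mul_div_comm, one_mul,
        Real.mul_self_sqrt (Nat.cast_nonneg _)]
    · rw [if_neg h, if_neg (fun h' : f j = f i => h h'.symm), mul_zero]
  · intro l _ hl
    rw [if_neg (fun h => hl h.symm), zero_mul]
  · intro h
    exact absurd (Finset.mem_univ _) h

/-- Let `(X_P, X_Q)` be a fractional automorphism of `(A,b,c)`
with `X_P` the partition matrix of a partition with normalized incidence
matrix `B`.  If `y*` is optimal for the reduced LP `(A·B, b, Bᵀ·c)`, then
`B·y*` is optimal for `(A, b, c)`. -/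
theorem lifted_solution_optimal {m n k : ℕ}
    (A : Matrix (Fin m) (Fin n) ℝ) (b : Fin m → ℝ) (c : Fin n → ℝ)
    (f : Fin n → Fin k) (XQ : Matrix (Fin m) (Fin m) ℝ)
    (hFA : IsFractionalAutomorphism A b c (partitionMatrix f) XQ)
    (ys : Fin k → ℝ)
    (hfeas : (A * incidenceMatrix f).mulVec ys ≤ b)
    (hopt : ∀ y : Fin k → ℝ, (A * incidenceMatrix f).mulVec y ≤ b →
      (incidenceMatrix f)ᵀ.mulVec c ⬝ᵥ ys ≤ (incidenceMatrix f)ᵀ.mulVec c ⬝ᵥ y) :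
    A.mulVec ((incidenceMatrix f).mulVec ys) ≤ b ∧
      ∀ x : Fin n → ℝ, A.mulVec x ≤ b →
        c ⬝ᵥ (incidenceMatrix f).mulVec ys ≤ c ⬝ᵥ x := by
  obtain ⟨_, ⟨hQ, _, _⟩, hA, hc, hb⟩ := hFA
  have hdot : ∀ y : Fin k → ℝ,
      (incidenceMatrix f)ᵀ.mulVec c ⬝ᵥ y = c ⬝ᵥ (incidenceMatrix f).mulVec y := by
    intro y
    rw [Matrix.mulVec_transpose, Matrix.dotProduct_mulVec]
  refine ⟨by rwa [Matrix.mulVec_mulVec], fun x hx => ?_⟩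
  have key := hopt ((incidenceMatrix f)ᵀ.mulVec x) ?_
  · rw [hdot, hdot, Matrix.mulVec_mulVec, incidence_mul_transpose,
      Matrix.dotProduct_mulVec c (partitionMatrix f) x, hc] at key
    exact key
  · rw [Matrix.mulVec_mulVec, Matrix.mul_assoc, incidence_mul_transpose, hA,
      ← Matrix.mulVec_mulVec]
    intro i
    calc (XQ.mulVec (A.mulVec x)) i ≤ (XQ.mulVec b) i := by
          simp only [Matrix.mulVec, dotProduct]
          exact Finset.sum_le_sum fun j _ => mul_le_mul_of_nonneg_left (hx j) (hQ i j)
      _ = b i := by rw [hb]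
end

section
/- Let (A, b, c) be an LP in dual form with A an m×n real matrix, and let (X_P, X_Q) be a fractional automorphism of (A, b, c) in which X_P is the partition matrix of a partition U of the column indices. Then restricting the feasible region to the fixed space of X_P does not change the set of attainable objective values in the following sense: for every x ∈ ℝ^n with A·x ≤ b entrywise, the vector X_P·x satisfies A·(X_P·x) ≤ b entrywise, X_P·(X_P·x) = X_P·x, and ⟨c, X_P·x⟩ = ⟨c, x⟩. Consequently, the infimum of ⟨c, x⟩ over {x : A·x ≤ b} equals the infimum of ⟨c, x⟩ over {x : A·x ≤ b and X_P·x = x}. -/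
open Matrix

/-- Restricting the feasible region to the fixed space of
`X_P` does not change the attainable objective values: every feasible `x`
projects to a feasible fixed point `X_P·x` with the same objective value,
and the infima coincide. -/
theorem fixed_space_restriction_preserves_values {m n k : ℕ}
    (A : Matrix (Fin m) (Fin n) ℝ) (b : Fin m → ℝ) (c : Fin n → ℝ)
    (f : Fin n → Fin k) (XQ : Matrix (Fin m) (Fin m) ℝ)
    (hFA : IsFractionalAutomorphism A b c (partitionMatrix f) XQ) :
    (∀ x : Fin n → ℝ, A.mulVec x ≤ b →
      A.mulVec ((partitionMatrix f).mulVec x) ≤ b ∧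
      (partitionMatrix f).mulVec ((partitionMatrix f).mulVec x) =
        (partitionMatrix f).mulVec x ∧
      c ⬝ᵥ (partitionMatrix f).mulVec x = c ⬝ᵥ x) ∧
    sInf {r : ℝ | ∃ x : Fin n → ℝ, A.mulVec x ≤ b ∧ c ⬝ᵥ x = r} =
      sInf {r : ℝ | ∃ x : Fin n → ℝ,
        (A.mulVec x ≤ b ∧ (partitionMatrix f).mulVec x = x) ∧ c ⬝ᵥ x = r} := by
  obtain ⟨hP, hQ, hAX, hc, hb⟩ := hFA
  have key : ∀ x : Fin n → ℝ, A.mulVec x ≤ b →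
      A.mulVec ((partitionMatrix f).mulVec x) ≤ b ∧
      (partitionMatrix f).mulVec ((partitionMatrix f).mulVec x) =
        (partitionMatrix f).mulVec x ∧
      c ⬝ᵥ (partitionMatrix f).mulVec x = c ⬝ᵥ x := by
    intro x hx
    refine ⟨?_, ?_, ?_⟩
    · rw [Matrix.mulVec_mulVec, hAX, ← Matrix.mulVec_mulVec]
      intro i
      calc (XQ.mulVec (A.mulVec x)) i ≤ (XQ.mulVec b) i := by
            simp only [Matrix.mulVec.eq_1 XQ, dotProduct.eq_1 (XQ i)]
            exact Finset.sum_le_sum fun j _ => mul_le_mul_of_nonneg_left (hx j) (hQ.1 i j)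
        _ = b i := by rw [hb]
    · funext i
      have h : ∀ j, partitionMatrix f i j * (partitionMatrix f).mulVec x j
          = partitionMatrix f i j * (partitionMatrix f).mulVec x i := by
        intro j
        by_cases hij : f i = f j
        · have : (partitionMatrix f).mulVec x j = (partitionMatrix f).mulVec x i := by
            simp only [Matrix.mulVec, dotProduct, partitionMatrix, hij]
          rw [this]
        · simp [partitionMatrix, hij]
      calc (partitionMatrix f).mulVec ((partitionMatrix f).mulVec x) i
          = ∑ j, partitionMatrix f i j * (partitionMatrix f).mulVec x j := rfl
        _ = ∑ j, partitionMatrix f i j * (partitionMatrix f).mulVec x i :=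
            Finset.sum_congr rfl fun j _ => h j
        _ = (partitionMatrix f).mulVec x i := by
            rw [← Finset.sum_mul, hP.2.1 i, one_mul]
    · rw [Matrix.dotProduct_mulVec, hc]
  refine ⟨key, ?_⟩
  congr 1
  ext r
  constructor
  · rintro ⟨x, hx, hr⟩
    obtain ⟨h1, h2, h3⟩ := key x hx
    exact ⟨_, ⟨h1, h2⟩, h3.trans hr⟩
  · rintro ⟨x, ⟨hx, _⟩, hr⟩
    exact ⟨x, hx, hr⟩
end

section
/- Let A be an m×n real matrix, let Q be a partition of the row indices and P a partition of the column indices, and suppose (Q, P) is sum-equitable for A: for every row class R ∈ Q, every pair of rows i, i' ∈ R, and every column class C ∈ P, Σ_{j∈C} A_{ij} = Σ_{j∈C} A_{i'j}; and for every column class C ∈ P, every pair of columns j, j' ∈ C, and every row class R ∈ Q, Σ_{i∈R} A_{ij} = Σ_{i∈R} A_{ij'}. Moreover, let b ∈ ℝ^m be constant on the classes of Q and c ∈ ℝ^n be constant on the classes of P. Then the pair (X_P, X_Q) of partition matrices of P and Q is a fractional automorphism of the LP (A, b, c): X_P and X_Q are doubly stochastic, A·X_P = X_Q·A, cᵀ·X_P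 = cᵀ, and X_Q·b = b. -/
open Matrix

lemma pm_symm {n k : ℕ} (f : Fin n → Fin k) (i j : Fin n) :
    partitionMatrix f i j = partitionMatrix f j i := by
  unfold partitionMatrix
  by_cases h : f i = f j
  · simp [h]
  · simp [h, Ne.symm h]

lemma pm_card_pos {n k : ℕ} (f : Fin n → Fin k) (i : Fin n) :
    (0 : ℝ) < ((Finset.univ.filter fun l => f l = f i).card : ℝ) := by
  exact_mod_cast Finset.card_pos.mpr ⟨i, by simp⟩

lemma pm_sum {n k : ℕ} (f : Fin n → Fin k) (v : Fin n → ℝ) (i : Fin n) :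
    ∑ j, partitionMatrix f i j * v j =
      (∑ j ∈ Finset.univ.filter (fun j => f j = f i), v j) /
        ((Finset.univ.filter fun l => f l = f i).card : ℝ) := by
  rw [Finset.sum_div, Finset.sum_filter]
  refine Finset.sum_congr rfl fun j _ => ?_
  unfold partitionMatrix
  by_cases h : f j = f i
  · rw [if_pos h.symm, if_pos h]; ring
  · rw [if_neg (Ne.symm h), if_neg h]; ring

lemma pm_const {n k : ℕ} (f : Fin n → Fin k) (v : Fin n → ℝ)
    (hv : ∀ i i', f i = f i' → v i = v i') (i : Fin n) :
    ∑ j, partitionMatrix f i j * v j = v i := by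
  rw [pm_sum, div_eq_iff (pm_card_pos f i).ne',
    Finset.sum_congr rfl (g := fun _ => v i) (fun j hj => hv j i (Finset.mem_filter.mp hj).2)]
  simp [mul_comm]

lemma pm_ds {n k : ℕ} (f : Fin n → Fin k) : IsDoublyStochastic (partitionMatrix f) := by
  have h : ∀ i, ∑ j, partitionMatrix f i j = 1 := fun i => by
    simpa using pm_const f (fun _ => 1) (fun _ _ _ => rfl) i
  refine ⟨fun i j => ?_, h, fun j => ?_⟩
  · unfold partitionMatrix
    split_ifs <;> positivity
  · rw [← h j]
    exact Finset.sum_congr rfl fun i _ => pm_symm f i j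

/-- If `(Q, P)` is sum-equitable for `A` (rows partitioned by
`fR : Fin m → Fin q`, columns by `fC : Fin n → Fin p`), `b` is constant on the
classes of `Q`, and `c` is constant on the classes of `P`, then the pair of
partition matrices `(X_P, X_Q)` is a fractional automorphism of `(A, b, c)`. -/
theorem sum_equitable_gives_fractionalAutomorphism {m n p q : ℕ}
    (A : Matrix (Fin m) (Fin n) ℝ) (b : Fin m → ℝ) (c : Fin n → ℝ)
    (fR : Fin m → Fin q) (fC : Fin n → Fin p)
    (hrow : ∀ i i' : Fin m, fR i = fR i' → ∀ C : Fin p,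
      ∑ j ∈ Finset.univ.filter (fun j => fC j = C), A i j =
        ∑ j ∈ Finset.univ.filter (fun j => fC j = C), A i' j)
    (hcol : ∀ j j' : Fin n, fC j = fC j' → ∀ R : Fin q,
      ∑ i ∈ Finset.univ.filter (fun i => fR i = R), A i j =
        ∑ i ∈ Finset.univ.filter (fun i => fR i = R), A i j')
    (hb : ∀ i i' : Fin m, fR i = fR i' → b i = b i')
    (hc : ∀ j j' : Fin n, fC j = fC j' → c j = c j') :
    IsFractionalAutomorphism A b c (partitionMatrix fC) (partitionMatrix fR) := by
  refine ⟨pm_ds fC, pm_ds fR, ?_, ?_, ?_⟩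
  · ext i j
    rw [Matrix.mul_apply, Matrix.mul_apply, pm_sum fR (fun k => A k j) i]
    have h1 : ∑ l, A i l * partitionMatrix fC l j = ∑ l, partitionMatrix fC j l * A i l :=
      Finset.sum_congr rfl fun l _ => by rw [pm_symm fC l j, mul_comm]
    rw [h1, pm_sum fC (fun l => A i l) j,
      div_eq_div_iff (pm_card_pos fC j).ne' (pm_card_pos fR i).ne']
    have h2 := Finset.sum_comm (s := Finset.univ.filter (fun k => fR k = fR i))
      (t := Finset.univ.filter (fun l => fC l = fC j)) (f := fun k l => A k l)
    rw [Finset.sum_congr rfl (fun k hk => hrow k i (Finset.mem_filter.mp hk).2 (fC j)),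
      Finset.sum_congr rfl (fun l hl => hcol l j (Finset.mem_filter.mp hl).2 (fR i)),
      Finset.sum_const, Finset.sum_const, nsmul_eq_mul, nsmul_eq_mul] at h2
    linarith
  · ext j
    rw [← pm_const fC c hc j]
    change ∑ i, c i * partitionMatrix fC i j = _
    exact Finset.sum_congr rfl fun i _ => by rw [pm_symm fC i j, mul_comm]
  · ext i
    exact pm_const fR b hb i
end
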